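/- Suppose that g_n is non-decreasing, k_n/g_n is eventually non-decreasing, ∑_{n≥1} g_n^{-1} = ∞, and n·g_n/k_n → 0 as n → ∞. Let s₁ > β and s₂ ∈ (s₁, 2s₁−β). If X is a weak solution of the dyadic model with X(0) ∈ H^{s₁} and X ∈ L^∞([0,T]; H^{s₁}), then X ∈ L^∞_loc((0,T]; H^{s₂}), and there exists a non-decreasing upper semi-continuous function φ̃ : (0,∞) → ℝ, positive on (0,∞), which extended by φ̃(0)=0 is continuous at 0, such that sup_{t∈(0,T]} ( φ̃(t) · ‖X(t)‖_{H^{s₂}} ) < ∞. -/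

import Mathlib

open scoped BigOperators ENNReal
open MeasureTheory Filter Set Topology

/-- `kₙ = 2^{βn}`. -/
noncomputable def kk (β : ℝ) (n : ℕ) : ℝ := (2 : ℝ) ^ (β * n)

/-- A weak solution of the dyadic model: `X 0 ≡ 0`, `X n 0 = x n`, and the ODE holds
for every `n ≥ 1` and `t ≥ 0` (the derivative being taken within `[0,∞)`). -/
def IsDyadicSolution (β : ℝ) (φ g : ℕ → ℝ) (x : ℕ → ℝ) (X : ℕ → ℝ → ℝ) : Prop :=
  (∀ t : ℝ, X 0 t = 0) ∧
  (∀ n : ℕ, 1 ≤ n → X n 0 = x n) ∧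
  (∀ n : ℕ, 1 ≤ n → ∀ t : ℝ, 0 ≤ t →
    HasDerivWithinAt (X n)
      (φ (n - 1) * kk β (n - 1) * (X (n - 1) t) ^ 2
        - φ n * kk β n * X n t * X (n + 1) t
        - kk β n / g n * X n t) (Set.Ici 0) t)

/-- `x ∈ Hˢ`, i.e. `∑_{n≥1} 2^{2sn} xₙ² < ∞`. -/
def MemHs (s : ℝ) (x : ℕ → ℝ) : Prop :=
  Summable (fun n : ℕ => (2 : ℝ) ^ (2 * s * ((n : ℝ) + 1)) * (x (n + 1)) ^ 2)

/-- `X ∈ L^∞(I; Hˢ)`. -/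
def MemLinftyHs (s : ℝ) (X : ℕ → ℝ → ℝ) (I : Set ℝ) : Prop :=
  ∃ M : ℝ, ∀ t ∈ I,
    Summable (fun n : ℕ => (2 : ℝ) ^ (2 * s * ((n : ℝ) + 1)) * (X (n + 1) t) ^ 2) ∧
    (∑' n : ℕ, (2 : ℝ) ^ (2 * s * ((n : ℝ) + 1)) * (X (n + 1) t) ^ 2) ≤ M

/-!
Each component solves a scalar linear equation `u' = a - b u - λ u` with `λ = kₙ / gₙ`, whose
forcing `a = φₙ₋₁ kₙ₋₁ Xₙ₋₁²` is `O(2^{(β - 2s₁)n})` and whose coefficient `b = φₙ kₙ Xₙ₊₁` is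
bounded because `s₁ ≥ β`. Grönwall's inequality for `e^{λt} u` bounds `|Xₙ(t)|` by the damped initial
datum, `2^{-s₁n} e^{-λt}`, plus a contribution `2^{(β - 2s₁)n}` of the forcing. The latter lies in
`H^{s₂}` for `s₂ < 2s₁ - β`. The former lies in `H^{s₂}` for every `t > 0`, since `n gₙ / kₙ → 0`
makes `kₙ / gₙ` grow faster than `n`; the weight is the reciprocal of its `H^{s₂}` norm, suitably
truncated.
-/

section Gronwall

theorem gronwallBound_le_exp_mul {δ K ε x : ℝ} (hK : 0 ≤ K) (hε : 0 ≤ ε) :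
    gronwallBound δ K ε x ≤ Real.exp (K * x) * (δ + ε * x) := by
  rcases hK.eq_or_lt with rfl | hK
  · simp [gronwallBound_K0]
  have h_exp : Real.exp (K * x) - 1 ≤ Real.exp (K * x) * (K * x) := by
    have h := mul_le_mul_of_nonneg_left (Real.add_one_le_exp (-(K * x))) (Real.exp_pos (K * x)).le
    rw [← Real.exp_add, add_neg_cancel, Real.exp_zero] at h
    linarith
  rw [gronwallBound_of_K_ne_0 hK.ne']
  calc δ * Real.exp (K * x) + ε / K * (Real.exp (K * x) - 1)
      ≤ δ * Real.exp (K * x) + ε / K * (Real.exp (K * x) * (K * x)) := by gcongr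
    _ = Real.exp (K * x) * (δ + ε * x) := by field_simp

theorem norm_le_of_norm_deriv_add_smul_le {E : Type*} [NormedAddCommGroup E] [NormedSpace ℝ E]
    {u u' : ℝ → E} {lam A B t : ℝ} (hlam : 0 ≤ lam) (hA : 0 ≤ A) (hB : 0 ≤ B) (ht : 0 ≤ t)
    (hu : ContinuousOn u (Icc 0 t))
    (hu' : ∀ s ∈ Ico 0 t, HasDerivWithinAt u (u' s) (Ici s) s)
    (hbound : ∀ s ∈ Ico 0 t, ‖u' s + lam • u s‖ ≤ B * ‖u s‖ + A) :
    ‖u t‖ ≤ Real.exp (B * t) * (Real.exp (-(lam * t)) * ‖u 0‖ + A * t) := by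
  -- The damping disappears from the derivative of `s ↦ exp (lam * s) • u s`.
  have hderiv : ∀ s ∈ Ico 0 t, HasDerivWithinAt (fun s => Real.exp (lam * s) • u s)
      (Real.exp (lam * s) • (u' s + lam • u s)) (Ici s) s := fun s hs => by
    have h_exp : HasDerivAt (fun s => Real.exp (lam * s)) (Real.exp (lam * s) * lam) s := by
      simpa using ((hasDerivAt_id s).const_mul lam).exp
    simpa only [smul_add, smul_smul] using h_exp.hasDerivWithinAt.fun_smul (hu' s hs)
  have hnorm : ∀ s ∈ Ico 0 t, ‖Real.exp (lam * s) • (u' s + lam • u s)‖ ≤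
      B * ‖Real.exp (lam * s) • u s‖ + A * Real.exp (lam * t) := fun s hs => by
    rw [norm_smul, norm_smul, Real.norm_of_nonneg (Real.exp_pos _).le]
    calc Real.exp (lam * s) * ‖u' s + lam • u s‖
        ≤ Real.exp (lam * s) * (B * ‖u s‖ + A) := by gcongr; exact hbound s hs
      _ = B * (Real.exp (lam * s) * ‖u s‖) + A * Real.exp (lam * s) := by ring
      _ ≤ B * (Real.exp (lam * s) * ‖u s‖) + A * Real.exp (lam * t) := by gcongr; exact hs.2.le
  have hgronwall := (norm_le_gronwallBound_of_norm_deriv_right_le (by fun_prop) hderiv le_rfl hnorm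
    t (right_mem_Icc.2 ht)).trans (gronwallBound_le_exp_mul hB (by positivity))
  rw [norm_smul, Real.norm_of_nonneg (Real.exp_pos _).le, mul_zero, Real.exp_zero, one_smul,
    sub_zero] at hgronwall
  have hcancel : Real.exp (-(lam * t)) * Real.exp (lam * t) = 1 := by
    rw [← Real.exp_add, neg_add_cancel, Real.exp_zero]
  calc ‖u t‖ = Real.exp (-(lam * t)) * (Real.exp (lam * t) * ‖u t‖) := by
        rw [← mul_assoc, hcancel, one_mul]
    _ ≤ Real.exp (-(lam * t)) *
        (Real.exp (B * t) * (‖u 0‖ + A * Real.exp (lam * t) * t)) := by gcongr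
    _ = Real.exp (B * t) * (Real.exp (-(lam * t)) * ‖u 0‖ + A * t) := by
        linear_combination Real.exp (B * t) * A * t * hcancel

end Gronwall

section Series

variable {ι : Type*}

theorem continuousOn_tsum_of_antitone {f : ι → ℝ → ℝ} {a : ℝ} (hcont : ∀ i, Continuous (f i))
    (hanti : ∀ i, Antitone (f i)) (hnonneg : ∀ i t, 0 ≤ f i t)
    (hsum : ∀ t, a < t → Summable fun i => f i t) :
    ContinuousOn (fun t => ∑' i, f i t) (Ioi a) := fun t ht => by
  obtain ⟨b, hab, hbt⟩ := exists_between (mem_Ioi.1 ht)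
  have hb : ContinuousOn (fun t => ∑' i, f i t) (Ici b) :=
    continuousOn_tsum (fun i => (hcont i).continuousOn) (hsum b hab) fun i s hs => by
      rw [Real.norm_of_nonneg (hnonneg i s)]
      exact hanti i hs
  exact (hb.continuousAt (Ici_mem_nhds hbt)).continuousWithinAt

theorem antitoneOn_tsum {f : ι → ℝ → ℝ} {a : ℝ} (hanti : ∀ i, Antitone (f i))
    (hsum : ∀ t, a < t → Summable fun i => f i t) :
    AntitoneOn (fun t => ∑' i, f i t) (Ioi a) := fun s hs t ht hst =>
  (hsum t ht).tsum_le_tsum (fun i => hanti i hst) (hsum s hs)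

theorem sq_le_of_abs_le_add {x a b P Q : ℝ} (hx : |x| ≤ P * a + Q * b) :
    x ^ 2 ≤ 2 * (P ^ 2 * a ^ 2 + Q ^ 2 * b ^ 2) :=
  calc x ^ 2 ≤ (P * a + Q * b) ^ 2 := sq_le_sq.2 (hx.trans (le_abs_self _))
    _ ≤ 2 * ((P * a) ^ 2 + (Q * b) ^ 2) := add_sq_le
    _ = 2 * (P ^ 2 * a ^ 2 + Q ^ 2 * b ^ 2) := by rw [mul_pow, mul_pow]

theorem summable_sq_of_abs_le_add {f a b : ι → ℝ} {P Q : ℝ} (ha : Summable fun i => a i ^ 2)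
    (hb : Summable fun i => b i ^ 2) (hf : ∀ i, |f i| ≤ P * a i + Q * b i) :
    Summable fun i => f i ^ 2 :=
  .of_nonneg_of_le (fun _ => sq_nonneg _) (fun i => sq_le_of_abs_le_add (hf i))
    (((ha.mul_left _).add (hb.mul_left _)).mul_left 2)

theorem tsum_sq_le_of_abs_le_add {f a b : ι → ℝ} {P Q : ℝ} (ha : Summable fun i => a i ^ 2)
    (hb : Summable fun i => b i ^ 2) (hf : ∀ i, |f i| ≤ P * a i + Q * b i) :
    ∑' i, f i ^ 2 ≤ 2 * (P ^ 2 * ∑' i, a i ^ 2 + Q ^ 2 * ∑' i, b i ^ 2) :=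
  hasSum_le (fun i => sq_le_of_abs_le_add (hf i)) (summable_sq_of_abs_le_add ha hb hf).hasSum
    (((ha.hasSum.mul_left _).add (hb.hasSum.mul_left _)).mul_left 2)

theorem mul_sqrt_tsum_sq_le_of_abs_le_add {f a b : ι → ℝ} {w P Q : ℝ} (hw : 0 ≤ w)
    (hwa : w * √(1 + ∑' i, a i ^ 2) ≤ 1) (ha : Summable fun i => a i ^ 2)
    (hb : Summable fun i => b i ^ 2) (hf : ∀ i, |f i| ≤ P * a i + Q * b i) :
    w * √(∑' i, f i ^ 2) ≤ √(2 * (P ^ 2 + Q ^ 2 * ∑' i, b i ^ 2)) := by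
  set A := ∑' i, a i ^ 2
  set C := P ^ 2 + Q ^ 2 * ∑' i, b i ^ 2
  have hA : 0 ≤ A := tsum_nonneg fun i => sq_nonneg (a i)
  have hQb : 0 ≤ Q ^ 2 * ∑' i, b i ^ 2 := by positivity
  have hC : 0 ≤ 2 * C := by positivity
  have htsum : ∑' i, f i ^ 2 ≤ 2 * C * (1 + A) :=
    (tsum_sq_le_of_abs_le_add ha hb hf).trans (by nlinarith [mul_nonneg hQb hA, sq_nonneg P])
  calc w * √(∑' i, f i ^ 2) ≤ w * √(2 * C * (1 + A)) := by gcongr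
    _ = √(2 * C) * (w * √(1 + A)) := by rw [Real.sqrt_mul hC, mul_left_comm]
    _ ≤ √(2 * C) := mul_le_of_le_one_right (Real.sqrt_nonneg _) hwa

theorem summable_pow_mul_exp_neg {r t : ℝ} (hr : 0 < r) (ht : 0 < t) {μ : ℕ → ℝ}
    (hμ : Tendsto (fun n : ℕ => μ n / n) atTop atTop) :
    Summable fun n : ℕ => r ^ n * Real.exp (-(μ n * t)) := by
  refine .of_norm_bounded_eventually_nat Real.summable_exp_neg_nat ?_
  filter_upwards [hμ.eventually_ge_atTop ((Real.log r + 1) / t), eventually_gt_atTop 0]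
    with n hn hn0
  rw [div_le_div_iff₀ ht (Nat.cast_pos.2 hn0)] at hn
  rw [Real.norm_of_nonneg (by positivity), ← Real.exp_log hr, ← Real.exp_nat_mul, ← Real.exp_add]
  exact Real.exp_le_exp.2 (by linarith)

end Series

section SmoothingWeight

/-- The weights `φ̃` of the smoothing estimate: functions on `[0, ∞)` that vanish continuously at
`0` and are positive, non-decreasing and upper semicontinuous on `(0, ∞)`. Nothing is required on
the negative half-line. -/
structure IsSmoothingWeight (F : ℝ → ℝ) : Prop where
  map_zero : F 0 = 0
  monotoneOn : MonotoneOn F (Ioi 0)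
  upperSemicontinuousOn : UpperSemicontinuousOn F (Ioi 0)
  continuousWithinAt_zero : ContinuousWithinAt F (Ici 0) 0
  pos : ∀ t : ℝ, 0 < t → 0 < F t

theorem isSmoothingWeight_min_div_sqrt {G : ℝ → ℝ} (hG : ∀ t, 0 ≤ G t)
    (hanti : AntitoneOn G (Ioi 0)) (hcont : ContinuousOn G (Ioi 0)) :
    IsSmoothingWeight fun t => min t 1 / √(1 + G t) where
  map_zero := by simp
  monotoneOn s hs t ht hst := by
    have hGst : G t ≤ G s := hanti hs ht hst
    have hGt : 0 ≤ G t := hG t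
    have hmin : 0 ≤ min t 1 := le_min (mem_Ioi.1 ht).le zero_le_one
    dsimp only
    gcongr
  upperSemicontinuousOn :=
    have hne : ∀ t ∈ Ioi (0 : ℝ), √(1 + G t) ≠ 0 := fun t _ =>
      (Real.sqrt_pos.2 (by linarith [hG t])).ne'
    (ContinuousOn.div (by fun_prop) (by fun_prop) hne).upperSemicontinuousOn
  continuousWithinAt_zero := by
    have hle : ∀ t : ℝ, 0 ≤ t → min t 1 / √(1 + G t) ≤ t := fun t ht =>
      (div_le_self (le_min ht zero_le_one) (Real.one_le_sqrt.2 (by linarith [hG t]))).trans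
        (min_le_left t 1)
    have hzero : min (0 : ℝ) 1 / √(1 + G 0) = 0 := by simp
    rw [ContinuousWithinAt, hzero]
    refine squeeze_zero' ?_ (eventually_mem_nhdsWithin.mono hle)
      (tendsto_nhdsWithin_of_tendsto_nhds tendsto_id)
    filter_upwards [self_mem_nhdsWithin] with t ht
    exact div_nonneg (le_min ht zero_le_one) (Real.sqrt_nonneg _)
  pos t ht := div_pos (lt_min ht one_pos) (Real.sqrt_pos.2 (by linarith [hG t]))

theorem exists_isSmoothingWeight_mul_sqrt_tsum_le {ι : Type*} {f : ι → ℝ → ℝ}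
    (hcont : ∀ i, Continuous (f i)) (hanti : ∀ i, Antitone (f i)) (hnonneg : ∀ i t, 0 ≤ f i t)
    (hsum : ∀ t, 0 < t → Summable fun i => f i t) :
    ∃ F, IsSmoothingWeight F ∧ ∀ t, F t * √(1 + ∑' i, f i t) ≤ 1 := by
  have hG : ∀ t, 0 ≤ ∑' i, f i t := fun t => tsum_nonneg fun i => hnonneg i t
  refine ⟨_, isSmoothingWeight_min_div_sqrt hG (antitoneOn_tsum hanti hsum)
    (continuousOn_tsum_of_antitone hcont hanti hnonneg hsum), fun t => ?_⟩
  rw [div_mul_cancel₀ _ (Real.sqrt_pos.2 (by linarith [hG t])).ne']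
  exact min_le_right t 1

end SmoothingWeight

section DyadicScale

theorem kk_pos (a : ℝ) (n : ℕ) : 0 < kk a n := Real.rpow_pos_of_pos two_pos _

theorem kk_add (a b : ℝ) (n : ℕ) : kk (a + b) n = kk a n * kk b n := by
  rw [kk, add_mul, Real.rpow_add two_pos, kk, kk]

theorem kk_eq_pow (a : ℝ) (n : ℕ) : kk a n = ((2 : ℝ) ^ a) ^ n :=
  Real.rpow_mul_natCast two_pos.le a n

theorem kk_succ (a : ℝ) (n : ℕ) : kk a (n + 1) = kk a n * (2 : ℝ) ^ a := by
  rw [kk_eq_pow, kk_eq_pow, pow_succ]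

theorem kk_sq (a : ℝ) (n : ℕ) : kk a n ^ 2 = kk (2 * a) n := by
  rw [sq, ← kk_add, two_mul]

theorem kk_le_one {a : ℝ} (ha : a ≤ 0) (n : ℕ) : kk a n ≤ 1 :=
  Real.rpow_le_one_of_one_le_of_nonpos one_le_two (mul_nonpos_of_nonpos_of_nonneg ha n.cast_nonneg)

theorem summable_kk {a : ℝ} (ha : a < 0) : Summable (kk a) :=
  (summable_geometric_of_lt_one (by positivity)
    (Real.rpow_lt_one_of_one_lt_of_neg one_lt_two ha)).congr fun n => (kk_eq_pow a n).symm

theorem two_rpow_mul_sq (s y : ℝ) (n : ℕ) :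
    (2 : ℝ) ^ (2 * s * ((n : ℝ) + 1)) * y ^ 2 = (kk s (n + 1) * y) ^ 2 := by
  rw [mul_pow, kk_sq, kk, Nat.cast_add_one]

theorem abs_kk_mul_le {a b r y e P Q : ℝ} {n : ℕ} (hy : |y| ≤ P * (kk a n * e) + Q * kk b n) :
    |kk r n * y| ≤ P * (kk (r + a) n * e) + Q * kk (r + b) n := by
  rw [abs_mul, abs_of_pos (kk_pos r n), kk_add, kk_add]
  linarith [mul_le_mul_of_nonneg_left hy (kk_pos r n).le]

theorem summable_sq_kk {a : ℝ} (ha : a < 0) : Summable fun n => kk a n ^ 2 := by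
  simpa only [kk_sq] using summable_kk (by linarith : 2 * a < 0)

theorem antitone_sq_kk_mul_exp_neg (a : ℝ) {c : ℝ} (hc : 0 ≤ c) (n : ℕ) :
    Antitone fun t => (kk a n * Real.exp (-(c * t))) ^ 2 := fun s t hst => by
  have hk := (kk_pos a n).le
  dsimp only
  gcongr

theorem tendsto_kk_div_div_atTop {β : ℝ} {g : ℕ → ℝ} (hgpos : ∀ n, 1 ≤ n → 0 < g n)
    (hng : Tendsto (fun n : ℕ => (n : ℝ) * g n / kk β n) atTop (𝓝 0)) :
    Tendsto (fun n : ℕ => kk β n / g n / n) atTop atTop := by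
  have hpos : ∀ᶠ n : ℕ in atTop, (n : ℝ) * g n / kk β n ∈ Ioi 0 := by
    filter_upwards [eventually_ge_atTop 1] with n hn
    exact div_pos (mul_pos (Nat.cast_pos.2 hn) (hgpos n hn)) (kk_pos β n)
  refine (tendsto_nhdsWithin_iff.2 ⟨hng, hpos⟩).inv_tendsto_nhdsGT_zero.congr fun n => ?_
  rw [Pi.inv_apply, inv_div, div_div, mul_comm]

theorem summable_sq_kk_mul_exp_neg (a : ℝ) {t : ℝ} (ht : 0 < t) {μ : ℕ → ℝ}
    (hμ : Tendsto (fun n : ℕ => μ n / n) atTop atTop) :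
    Summable fun n : ℕ => (kk a n * Real.exp (-(μ n * t))) ^ 2 := by
  refine (summable_pow_mul_exp_neg (r := 2 ^ (2 * a)) (by positivity) (mul_pos two_pos ht)
    hμ).congr fun n => ?_
  rw [mul_pow, kk_sq, kk_eq_pow, ← Real.exp_nat_mul, Nat.cast_ofNat]
  ring_nf

end DyadicScale

section DyadicModel

variable {β s T Φ K : ℝ} {φ g x : ℕ → ℝ} {X : ℕ → ℝ → ℝ}

theorem MemLinftyHs.exists_abs_le {I : Set ℝ} (hX : MemLinftyHs s X I) :
    ∃ K, 0 ≤ K ∧ ∀ t ∈ I, ∀ n, |X (n + 1) t| ≤ K * kk (-s) (n + 1) := by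
  obtain ⟨M, hM⟩ := hX
  refine ⟨√M, Real.sqrt_nonneg M, fun t ht n => ?_⟩
  obtain ⟨hsum, hle⟩ := hM t ht
  have hterm := (hsum.le_tsum n fun j _ => by positivity).trans hle
  rw [two_rpow_mul_sq] at hterm
  have hinv : kk s (n + 1) * kk (-s) (n + 1) = 1 := by
    rw [← kk_add, add_neg_cancel, kk, zero_mul, Real.rpow_zero]
  calc |X (n + 1) t| = |kk s (n + 1) * X (n + 1) t| * kk (-s) (n + 1) := by
        rw [abs_mul, abs_of_pos (kk_pos s _), mul_right_comm, hinv, one_mul]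
    _ ≤ √M * kk (-s) (n + 1) :=
        mul_le_mul_of_nonneg_right (Real.abs_le_sqrt hterm) (kk_pos _ _).le

theorem abs_forcing_le {c y : ℝ} {n : ℕ} (hc : |c| ≤ Φ) (hy : |y| ≤ K * kk (-s) n) :
    |c * kk β n * y ^ 2| ≤ Φ * K ^ 2 * kk (β - 2 * s) n := by
  have hk := (kk_pos β n).le
  have hΦ : 0 ≤ Φ := (abs_nonneg c).trans hc
  calc |c * kk β n * y ^ 2| = |c| * kk β n * |y| ^ 2 := by
        rw [abs_mul, abs_mul, abs_of_nonneg hk, abs_pow]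
    _ ≤ Φ * kk β n * (K * kk (-s) n) ^ 2 := by gcongr
    _ = Φ * K ^ 2 * kk (β - 2 * s) n := by
        rw [mul_pow, kk_sq, show β - 2 * s = β + 2 * -s by ring, kk_add]
        ring

theorem abs_transport_le {c y : ℝ} {n : ℕ} (hβs : β ≤ s) (hK : 0 ≤ K) (hc : |c| ≤ Φ)
    (hy : |y| ≤ K * kk (-s) (n + 1)) : |c * kk β n * y| ≤ Φ * K * 2 ^ (-s) := by
  have hk := (kk_pos β n).le
  have hΦ : 0 ≤ Φ := (abs_nonneg c).trans hc
  calc |c * kk β n * y| = |c| * kk β n * |y| := by rw [abs_mul, abs_mul, abs_of_nonneg hk]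
    _ ≤ Φ * kk β n * (K * kk (-s) (n + 1)) := by gcongr
    _ = Φ * K * 2 ^ (-s) * kk (β - s) n := by
        rw [kk_succ, sub_eq_add_neg β, kk_add]
        ring
    _ ≤ Φ * K * 2 ^ (-s) := mul_le_of_le_one_right (by positivity) (kk_le_one (by linarith) n)

namespace IsDyadicSolution

theorem hasDerivWithinAt_succ (hsol : IsDyadicSolution β φ g x X) (n : ℕ) {t : ℝ} (ht : 0 ≤ t) :
    HasDerivWithinAt (X (n + 1)) (φ n * kk β n * X n t ^ 2
      - φ (n + 1) * kk β (n + 1) * X (n + 1) t * X (n + 2) t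
      - kk β (n + 1) / g (n + 1) * X (n + 1) t) (Ici 0) t :=
  hsol.2.2 (n + 1) n.succ_pos t ht

theorem exists_abs_le {I : Set ℝ} (hsol : IsDyadicSolution β φ g x X) (hX : MemLinftyHs s X I) :
    ∃ K, 0 ≤ K ∧ ∀ t ∈ I, ∀ n, |X n t| ≤ K * kk (-s) n := by
  obtain ⟨K, hK, hle⟩ := hX.exists_abs_le
  refine ⟨K, hK, fun t ht n => ?_⟩
  cases n with
  | zero =>
    rw [hsol.1 t, abs_zero]
    exact mul_nonneg hK (kk_pos _ _).le
  | succ n => exact hle t ht n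

theorem abs_le_exp_mul (hsol : IsDyadicSolution β φ g x X) (hφ : ∀ n, |φ n| ≤ Φ) (hβs : β ≤ s)
    (hK : 0 ≤ K) {t : ℝ} (ht : 0 ≤ t) (hX : ∀ r ∈ Icc 0 t, ∀ n, |X n r| ≤ K * kk (-s) n)
    {n : ℕ} (hg : 0 < g (n + 1)) :
    |X (n + 1) t| ≤ Real.exp (Φ * K * 2 ^ (-s) * t) *
      (Real.exp (-(kk β (n + 1) / g (n + 1) * t)) * |X (n + 1) 0|
        + Φ * K ^ 2 * kk (β - 2 * s) n * t) := by
  have hΦ : 0 ≤ Φ := (abs_nonneg _).trans (hφ 0)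
  have hk := (kk_pos (β - 2 * s) n).le
  have hderiv : ∀ r ∈ Ico 0 t, HasDerivWithinAt (X (n + 1)) _ (Ici r) r := fun r hr =>
    (hsol.hasDerivWithinAt_succ n hr.1).mono (Ici_subset_Ici.2 hr.1)
  have hcont : ContinuousOn (X (n + 1)) (Icc 0 t) := fun r hr =>
    (hsol.hasDerivWithinAt_succ n hr.1).continuousWithinAt.mono Icc_subset_Ici_self
  refine norm_le_of_norm_deriv_add_smul_le (div_pos (kk_pos β _) hg).le (by positivity)
    (by positivity) ht hcont hderiv fun r hr => ?_
  have hXr := hX r (Ico_subset_Icc_self hr)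
  have hforcing := abs_forcing_le (β := β) (hφ n) (hXr n)
  have htransport := abs_transport_le hβs hK (hφ (n + 1)) (hXr (n + 2))
  rw [smul_eq_mul, sub_add_cancel, Real.norm_eq_abs, Real.norm_eq_abs, mul_right_comm _ (X _ r)]
  refine (abs_sub _ _).trans ?_
  rw [abs_mul _ (X (n + 1) r)]
  linarith [mul_le_mul_of_nonneg_right htransport (abs_nonneg (X (n + 1) r))]

theorem exists_abs_le_damped_add_forced (hsol : IsDyadicSolution β φ g x X)
    (hφ : ∃ Φ, ∀ n, |φ n| ≤ Φ) (hgpos : ∀ n, 1 ≤ n → 0 < g n) (hβs : β ≤ s)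
    (hX : MemLinftyHs s X (Icc 0 T)) :
    ∃ P Q, ∀ t ∈ Icc 0 T, ∀ n, |X (n + 1) t| ≤
      P * (kk (-s) (n + 1) * Real.exp (-(kk β (n + 1) / g (n + 1) * t)))
        + Q * kk (β - 2 * s) (n + 1) := by
  obtain ⟨Φ, hφ⟩ := hφ
  obtain ⟨K, hK, hle⟩ := hsol.exists_abs_le hX
  have hΦ : 0 ≤ Φ := (abs_nonneg _).trans (hφ 0)
  set B := Φ * K * 2 ^ (-s)
  refine ⟨Real.exp (B * T) * K,
    Real.exp (B * T) * (Φ * K ^ 2 * T * 2 ^ (2 * s - β)), fun t ht n => ?_⟩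
  have hkk : kk (β - 2 * s) n = kk (β - 2 * s) (n + 1) * 2 ^ (2 * s - β) := by
    rw [kk_succ, mul_assoc, ← Real.rpow_add two_pos, sub_add_sub_cancel, sub_self,
      Real.rpow_zero, mul_one]
  have hk := (kk_pos (β - 2 * s) n).le
  calc |X (n + 1) t|
      ≤ Real.exp (B * t) * (Real.exp (-(kk β (n + 1) / g (n + 1) * t)) * |X (n + 1) 0|
          + Φ * K ^ 2 * kk (β - 2 * s) n * t) :=
        hsol.abs_le_exp_mul hφ hβs hK ht.1
          (fun r hr => hle r (Icc_subset_Icc_right ht.2 hr)) (hgpos _ n.succ_pos)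
    _ ≤ Real.exp (B * T) * (Real.exp (-(kk β (n + 1) / g (n + 1) * t)) * (K * kk (-s) (n + 1))
          + Φ * K ^ 2 * kk (β - 2 * s) n * T) := by
        have hinit := hle 0 (left_mem_Icc.2 (ht.1.trans ht.2)) (n + 1)
        have ht0 := ht.1
        have htT := ht.2
        gcongr
    _ = _ := by
        rw [hkk]
        ring

end IsDyadicSolution

end DyadicModel

theorem dyadic_smoothing_quantitative_general
    (β : ℝ) (φ g : ℕ → ℝ)
    (hφ : ∃ Φ : ℝ, ∀ n : ℕ, |φ n| ≤ Φ)
    (hgpos : ∀ n : ℕ, 1 ≤ n → 0 < g n)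
    (hng : Filter.Tendsto (fun n : ℕ => (n : ℝ) * g n / kk β n) Filter.atTop (nhds 0))
    (T : ℝ) (s₁ s₂ : ℝ) (hs₁ : β ≤ s₁) (hs₂ : s₂ < 2 * s₁ - β)
    (x : ℕ → ℝ) (X : ℕ → ℝ → ℝ) (hsol : IsDyadicSolution β φ g x X)
    (hX : MemLinftyHs s₁ X (Set.Icc 0 T)) :
    ∃ F : ℝ → ℝ, F 0 = 0 ∧
      MonotoneOn F (Set.Ioi 0) ∧
      UpperSemicontinuousOn F (Set.Ioi 0) ∧
      ContinuousWithinAt F (Set.Ici 0) 0 ∧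
      (∀ t : ℝ, 0 < t → 0 < F t) ∧
      ∃ M : ℝ, ∀ t ∈ Set.Ioc (0 : ℝ) T,
        Summable (fun n : ℕ => (2 : ℝ) ^ (2 * s₂ * ((n : ℝ) + 1)) * (X (n + 1) t) ^ 2) ∧
        F t * Real.sqrt (∑' n : ℕ,
            (2 : ℝ) ^ (2 * s₂ * ((n : ℝ) + 1)) * (X (n + 1) t) ^ 2) ≤ M := by
  obtain ⟨P, Q, hPQ⟩ := hsol.exists_abs_le_damped_add_forced hφ hgpos hs₁ hX
  have hdamped : ∀ t, 0 < t → Summable fun n =>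
      (kk (s₂ + -s₁) (n + 1) * Real.exp (-(kk β (n + 1) / g (n + 1) * t))) ^ 2 := fun t ht =>
    (summable_nat_add_iff 1).2
      (summable_sq_kk_mul_exp_neg (s₂ + -s₁) ht (tendsto_kk_div_div_atTop hgpos hng))
  have hforced : Summable fun n => kk (s₂ + (β - 2 * s₁)) (n + 1) ^ 2 :=
    (summable_nat_add_iff 1).2 (summable_sq_kk (by linarith))
  obtain ⟨F, hF, hF_le⟩ := exists_isSmoothingWeight_mul_sqrt_tsum_le (fun n => by fun_prop)
    (fun n => antitone_sq_kk_mul_exp_neg _ (div_pos (kk_pos β _) (hgpos _ n.succ_pos)).le _)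
    (fun n t => sq_nonneg _) hdamped
  refine ⟨F, hF.map_zero, hF.monotoneOn, hF.upperSemicontinuousOn, hF.continuousWithinAt_zero,
    hF.pos, √(2 * (P ^ 2 + Q ^ 2 * ∑' n, kk (s₂ + (β - 2 * s₁)) (n + 1) ^ 2)), fun t ht => ?_⟩
  have hkkX := fun n => abs_kk_mul_le (r := s₂) (hPQ t (Ioc_subset_Icc_self ht) n)
  simp_rw [two_rpow_mul_sq]
  exact ⟨summable_sq_of_abs_le_add (hdamped t ht.1) hforced hkkX,
    mul_sqrt_tsum_sq_le_of_abs_le_add (hF.pos t ht.1).le (hF_le t) (hdamped t ht.1) hforced hkkX⟩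

/-- The smoothing lemma: for `s₁ > β` and `s₂ ∈ (s₁, 2s₁ − β)`, a solution bounded in
`H^{s₁}` on `[0,T]` lies in `L^∞_loc((0,T]; H^{s₂})`; more precisely there is a
non-decreasing upper semi-continuous weight `F`, vanishing continuously at `0` and
positive on `(0,∞)`, with `sup_{t∈(0,T]} F(t)·‖X(t)‖_{H^{s₂}} < ∞`. -/
theorem dyadic_smoothing_quantitative
    (β : ℝ) (hβ : 0 < β) (φ g : ℕ → ℝ)
    (hφ : ∃ Φ : ℝ, ∀ n : ℕ, |φ n| ≤ Φ)
    (hgpos : ∀ n : ℕ, 1 ≤ n → 0 < g n)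
    (hgmono : ∀ n m : ℕ, 1 ≤ n → n ≤ m → g n ≤ g m)
    (hkg : ∃ N : ℕ, ∀ n m : ℕ, N ≤ n → n ≤ m → kk β n / g n ≤ kk β m / g m)
    (hgdiv : ¬ Summable fun n : ℕ => (g (n + 1))⁻¹)
    (hng : Filter.Tendsto (fun n : ℕ => (n : ℝ) * g n / kk β n) Filter.atTop (nhds 0))
    (T : ℝ) (hT : 0 < T) (s₁ s₂ : ℝ) (hs₁ : β < s₁) (hs₂ : s₁ < s₂)
    (hs₂' : s₂ < 2 * s₁ - β)
    (x : ℕ → ℝ) (X : ℕ → ℝ → ℝ) (hsol : IsDyadicSolution β φ g x X)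
    (hx : MemHs s₁ x) (hX : MemLinftyHs s₁ X (Set.Icc 0 T)) :
    ∃ F : ℝ → ℝ, F 0 = 0 ∧
      MonotoneOn F (Set.Ioi 0) ∧
      UpperSemicontinuousOn F (Set.Ioi 0) ∧
      ContinuousWithinAt F (Set.Ici 0) 0 ∧
      (∀ t : ℝ, 0 < t → 0 < F t) ∧
      ∃ M : ℝ, ∀ t ∈ Set.Ioc (0 : ℝ) T,
        Summable (fun n : ℕ => (2 : ℝ) ^ (2 * s₂ * ((n : ℝ) + 1)) * (X (n + 1) t) ^ 2) ∧
        F t * Real.sqrt (∑' n : ℕ,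
            (2 : ℝ) ^ (2 * s₂ * ((n : ℝ) + 1)) * (X (n + 1) t) ^ 2) ≤ M :=
  dyadic_smoothing_quantitative_general β φ g hφ hgpos hng T s₁ s₂ hs₁.le hs₂' x X hsol hX
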